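/- arXiv:1810.08926 — 2 statements merged into one kernel-verified Lean document; each statement's English description precedes it below -/
import Mathlib

section
/- (Theorem 2) Let A : ℝ^k → ℝ^ℓ be a continuous linear map between finite-dimensional real inner product spaces with operator norm ‖A‖, let w ∈ ℝ^k with ‖w‖ = 1 and ρ(A; w) < 1, let K ⊆ ℝ^k be a nonempty bounded set, and let μ* ∈ K be a maximizer of μ ↦ ⟪w, μ⟫ over K. Then there exists a vector wL ∈ ℝ^ℓ with ‖wL‖ = 1 such that for every μ ∈ K, ⟪wL, A μ⟫ − ⟪wL, A μ*⟫ ≤ (diam K · ‖A‖ · ρ(A; w)) / √(1 − ρ(A; w)²). -/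
open scoped RealInnerProductSpace

/-- The teaching risk of a worldview `A` with respect to reward weights `w`:
`ρ(A; w) = sup { ⟪w, v⟫ : v ∈ ker A, ‖v‖ ≤ 1 }`. -/
noncomputable def teachingRisk {k l : ℕ}
    (A : EuclideanSpace ℝ (Fin k) →L[ℝ] EuclideanSpace ℝ (Fin l))
    (w : EuclideanSpace ℝ (Fin k)) : ℝ :=
  sSup {r : ℝ | ∃ v ∈ LinearMap.ker A.toLinearMap, ‖v‖ ≤ 1 ∧ r = ⟪w, v⟫}

theorem theorem2_guarantee_bounded_suboptimality {k l : ℕ}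
    (A : EuclideanSpace ℝ (Fin k) →L[ℝ] EuclideanSpace ℝ (Fin l))
    (w : EuclideanSpace ℝ (Fin k)) (hw : ‖w‖ = 1) (hρ : teachingRisk A w < 1)
    (K : Set (EuclideanSpace ℝ (Fin k))) (hne : K.Nonempty) (hK : Bornology.IsBounded K)
    (μstar : EuclideanSpace ℝ (Fin k)) (hμstar : μstar ∈ K)
    (hmax : ∀ μ ∈ K, ⟪w, μ⟫ ≤ ⟪w, μstar⟫) :
    ∃ wL : EuclideanSpace ℝ (Fin l), ‖wL‖ = 1 ∧ ∀ μ ∈ K,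
      ⟪wL, A μ⟫ - ⟪wL, A μstar⟫ ≤
        Metric.diam K * ‖A‖ * teachingRisk A w / Real.sqrt (1 - teachingRisk A w ^ 2) := by
  set ρ := teachingRisk A w with hρdef
  set N := LinearMap.ker A.toLinearMap with hN
  have hbdd : BddAbove {r : ℝ | ∃ v ∈ N, ‖v‖ ≤ 1 ∧ r = ⟪w, v⟫} := by
    refine ⟨1, ?_⟩
    rintro r ⟨v, -, hv, rfl⟩
    calc ⟪w, v⟫ ≤ ‖w‖ * ‖v‖ := real_inner_le_norm w v
      _ ≤ 1 := by rw [hw, one_mul]; exact hv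
  have hle : ∀ v ∈ N, ‖v‖ ≤ 1 → ⟪w, v⟫ ≤ ρ := fun v hv h1 =>
    le_csSup hbdd ⟨v, hv, h1, rfl⟩
  have hρ0 : 0 ≤ ρ := by
    simpa using hle 0 N.zero_mem (by simp)
  obtain ⟨n, hn, u, hu, hwu⟩ := N.exists_add_mem_mem_orthogonal w
  have hnu : ⟪n, u⟫ = 0 := hu n hn
  have hwn : ⟪w, n⟫ = ‖n‖ ^ 2 := by
    rw [hwu, inner_add_left, real_inner_comm, real_inner_self_eq_norm_sq, real_inner_comm, hnu,
      add_zero]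
  have hnρ : ‖n‖ ≤ ρ := by
    rcases eq_or_ne n 0 with h0 | h0
    · simpa [h0] using hρ0
    · have hp : ‖n‖ ≠ 0 := norm_ne_zero_iff.mpr h0
      have h := hle (‖n‖⁻¹ • n) (N.smul_mem _ hn) (by rw [norm_smul]; simp [hp])
      rw [inner_smul_right, hwn] at h
      have : ‖n‖⁻¹ * ‖n‖ ^ 2 = ‖n‖ := by field_simp
      linarith
  have hpyth : ‖n‖ ^ 2 + ‖u‖ ^ 2 = 1 := by
    have h := norm_add_sq_real n u
    rw [← hwu, hw, hnu] at h
    linarith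
  have hpos : 0 < 1 - ρ ^ 2 := by nlinarith
  have hspos : 0 < Real.sqrt (1 - ρ ^ 2) := Real.sqrt_pos.mpr hpos
  have hsu : Real.sqrt (1 - ρ ^ 2) ≤ ‖u‖ := by
    apply Real.sqrt_le_iff.mpr ⟨norm_nonneg _, ?_⟩
    nlinarith [norm_nonneg n]
  obtain ⟨y, hy⟩ : ∃ y, ContinuousLinearMap.adjoint A y = u := by
    have h : u ∈ (LinearMap.range (ContinuousLinearMap.adjoint A).toLinearMap).topologicalClosure := by
      rw [← ContinuousLinearMap.orthogonal_ker]
      exact hu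
    rw [(Submodule.closed_of_finiteDimensional _).submodule_topologicalClosure_eq] at h
    exact h
  have huy : ‖u‖ ≤ ‖A‖ * ‖y‖ := by
    rw [← hy]
    refine (ContinuousLinearMap.le_opNorm _ _).trans (le_of_eq ?_)
    rw [LinearIsometryEquiv.norm_map]
  have hAy : 0 < ‖A‖ * ‖y‖ := lt_of_lt_of_le (lt_of_lt_of_le hspos hsu) huy
  have hy0 : 0 < ‖y‖ := pos_of_mul_pos_right hAy (norm_nonneg _)
  refine ⟨‖y‖⁻¹ • y, by rw [norm_smul]; simp [hy0.ne'], fun μ hμ => ?_⟩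
  have hd : ‖μ - μstar‖ ≤ Metric.diam K := by
    rw [← dist_eq_norm]
    exact Metric.dist_le_diam_of_mem hK hμ hμstar
  have h1 : ⟪y, A (μ - μstar)⟫ ≤ ρ * Metric.diam K := by
    rw [← ContinuousLinearMap.adjoint_inner_left, hy]
    have e1 : ⟪w, μ - μstar⟫ ≤ 0 := by
      rw [inner_sub_right]
      linarith [hmax μ hμ]
    have e2 : ⟪w, μ - μstar⟫ = ⟪n, μ - μstar⟫ + ⟪u, μ - μstar⟫ := by
      rw [← inner_add_left, ← hwu]
    have e3 := neg_le_of_abs_le (abs_real_inner_le_norm n (μ - μstar))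
    have e4 : ‖n‖ * ‖μ - μstar‖ ≤ ρ * Metric.diam K := by gcongr
    linarith
  have hDρ : 0 ≤ ρ * Metric.diam K := mul_nonneg hρ0 Metric.diam_nonneg
  rw [← inner_sub_right, ← map_sub, real_inner_smul_left, le_div_iff₀ hspos]
  calc ‖y‖⁻¹ * ⟪y, A (μ - μstar)⟫ * Real.sqrt (1 - ρ ^ 2)
      ≤ ‖y‖⁻¹ * (ρ * Metric.diam K) * (‖A‖ * ‖y‖) := by
        have := hsu.trans huy
        gcongr
    _ = Metric.diam K * ‖A‖ * ρ := by field_simp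
end

section
/- Let A : ℝ^k → ℝ^ℓ be a nonzero continuous linear map between finite-dimensional real inner product spaces with operator norm ‖A‖, let w ∈ ℝ^k with ‖w‖ = 1 and ρ(A; w) < 1, and let Q(w) be the orthogonal projection of w onto (ker A)^⊥. Then there exists u ∈ ℝ^ℓ with A* u = Q(w) and ‖u‖ ≥ √(1 − ρ(A; w)²) / ‖A‖. -/
open scoped RealInnerProductSpace

theorem exists_adjoint_preimage_of_projection {k l : ℕ}
    (A : EuclideanSpace ℝ (Fin k) →L[ℝ] EuclideanSpace ℝ (Fin l)) (hA : A ≠ 0)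
    (w : EuclideanSpace ℝ (Fin k)) (hw : ‖w‖ = 1) (hρ : teachingRisk A w < 1) :
    ∃ u : EuclideanSpace ℝ (Fin l),
      ContinuousLinearMap.adjoint A u =
        (Submodule.orthogonalProjectionOnto (LinearMap.ker A.toLinearMap)ᗮ w : EuclideanSpace ℝ (Fin k)) ∧
      Real.sqrt (1 - teachingRisk A w ^ 2) / ‖A‖ ≤ ‖u‖ := by
  set K := LinearMap.ker A.toLinearMap with hK
  have hmem : (Submodule.orthogonalProjectionOnto Kᗮ w : EuclideanSpace ℝ (Fin k)) ∈
      (ContinuousLinearMap.adjoint A).range := by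
    have h1 : Kᗮ = (ContinuousLinearMap.adjoint A).range.topologicalClosure :=
      ContinuousLinearMap.orthogonal_ker A
    rw [IsClosed.submodule_topologicalClosure_eq (Submodule.closed_of_finiteDimensional _)] at h1
    rw [← h1]
    exact Submodule.coe_mem _
  obtain ⟨u, hu⟩ := hmem
  replace hu : ContinuousLinearMap.adjoint A u =
    (Submodule.orthogonalProjectionOnto Kᗮ w : EuclideanSpace ℝ (Fin k)) := hu
  refine ⟨u, hu, ?_⟩
  have hpos : 0 < ‖A‖ := norm_pos_iff.mpr hA
  have hpy := Submodule.norm_sq_eq_add_norm_sq_projection w K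
  have hq : ‖Submodule.orthogonalProjectionOnto Kᗮ w‖ ≤ ‖A‖ * ‖u‖ := by
    have h2 := (ContinuousLinearMap.adjoint A).le_opNorm u
    rw [hu, LinearIsometryEquiv.norm_map] at h2
    exact h2
  have hp : ‖Submodule.orthogonalProjectionOnto K w‖ ≤ teachingRisk A w := by
    set p := Submodule.orthogonalProjectionOnto K w with hpdef
    refine le_csSup ⟨1, ?_⟩ ⟨(‖p‖⁻¹ • p : K), Submodule.coe_mem _, ?_, ?_⟩
    · rintro r ⟨v, -, hv, rfl⟩
      calc ⟪w, v⟫ ≤ ‖w‖ * ‖v‖ := real_inner_le_norm _ _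
        _ ≤ 1 := by rw [hw, one_mul]; exact hv
    · rw [← Submodule.coe_norm, norm_smul, norm_inv, norm_norm]
      exact inv_mul_le_one
    · rw [← Submodule.inner_orthogonalProjectionOnto_eq_of_mem_right, ← hpdef,
        real_inner_smul_right, real_inner_self_eq_norm_sq]
      by_cases h0 : ‖p‖ = 0
      · simp [h0]
      · field_simp
  rw [div_le_iff₀ hpos, mul_comm]
  refine le_trans (Real.sqrt_le_iff.mpr ⟨norm_nonneg _, ?_⟩) hq
  rw [hw] at hpy
  have := pow_le_pow_left₀ (norm_nonneg _) hp 2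
  linarith
end
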